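/- Let R be a commutative Noetherian local ring, let M, N be finitely generated R-modules, and let n ≥ 3 be an integer. If depth_R(Hom_R(M,N)) ≥ n, depth_R(N) ≥ n−1, and Ext^i_R(M,N) has finite length for all i = 1, …, n−2, then Ext^i_R(M,N) = 0 for all i = 1, …, n−2. -/

import Mathlib

/-!
Let `k` be the residue field, `f : F → M` a surjection from a finite free module and `K = ker f` the
syzygy, so that `0 → Hom(M, N) → Hom(F, N) → Hom(K, N) → Ext¹(M, N) → 0` is exact. Let `C` be the
image of the restriction map `Hom(F, N) → Hom(K, N)`.

Since `Hom(F, N)` is a finite direct sum of copies of `N`, it has depth at least `n - 1`, and since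
`Hom(M, N)` has depth at least `n`, the module `C` has depth at least `n - 1 ≥ 2`. Moreover
`Hom(k, Hom(K, N)) = 0` because `depth N ≥ 1`. The long exact sequence of `Ext(k, -)` for
`0 → C → Hom(K, N) → Ext¹(M, N) → 0` then gives `Hom(k, Ext¹(M, N)) = 0`. A nonzero module of finite
length contains a copy of `k`, so `Ext¹(M, N) = 0`.

Consequently `Hom(K, N) = C` has depth at least `n - 1`, while `Extⁱ⁺¹(M, N) = Extⁱ(K, N)` for
`i ≥ 1`, and the result follows by induction on `n` applied to `K`. This is `ext_vanishing`.

The long exact sequences are those of `CategoryTheory.Abelian.Ext`, whereas the theorem concerns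
`Ext` as a left derived functor. The two are compared by `cocycleClass`, which sends a cocycle of
`Hom(P, N)`, for `P` a projective resolution of `M`, to its class. It is linear and surjective, and in
positive degrees its kernel consists of the coboundaries.
-/

open CategoryTheory TensorProduct

/-- The Ext group `Ext^i_R(M,N)` as a type. -/
noncomputable def ExtM (R : Type) [CommRing R] (M N : Type) [AddCommGroup M] [Module R M]
    [AddCommGroup N] [Module R N] (i : ℕ) : Type :=
  ((Ext R (ModuleCat R) i).obj (Opposite.op (ModuleCat.of R M))).obj (ModuleCat.of R N)


noncomputable instance (R : Type) [CommRing R] (M N : Type) [AddCommGroup M] [Module R M]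
    [AddCommGroup N] [Module R N] (i : ℕ) : AddCommGroup (ExtM R M N i) :=
  inferInstanceAs (AddCommGroup
    (((Ext R (ModuleCat R) i).obj (Opposite.op (ModuleCat.of R M))).obj (ModuleCat.of R N)))

noncomputable instance (R : Type) [CommRing R] (M N : Type) [AddCommGroup M] [Module R M]
    [AddCommGroup N] [Module R N] (i : ℕ) : Module R (ExtM R M N i) :=
  inferInstanceAs (Module R
    (((Ext R (ModuleCat R) i).obj (Opposite.op (ModuleCat.of R M))).obj (ModuleCat.of R N)))

/-- The Tor group `Tor_i^R(M,N)` as a type. -/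
noncomputable def TorM (R : Type) [CommRing R] (M N : Type) [AddCommGroup M] [Module R M]
    [AddCommGroup N] [Module R N] (i : ℕ) : Type :=
  ((Tor (ModuleCat R) i).obj (ModuleCat.of R M)).obj (ModuleCat.of R N)

noncomputable instance (R : Type) [CommRing R] (M N : Type) [AddCommGroup M] [Module R M]
    [AddCommGroup N] [Module R N] (i : ℕ) : AddCommGroup (TorM R M N i) :=
  inferInstanceAs (AddCommGroup
    (((Tor (ModuleCat R) i).obj (ModuleCat.of R M)).obj (ModuleCat.of R N)))

noncomputable instance (R : Type) [CommRing R] (M N : Type) [AddCommGroup M] [Module R M]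
    [AddCommGroup N] [Module R N] (i : ℕ) : Module R (TorM R M N i) :=
  inferInstanceAs (Module R
    (((Tor (ModuleCat R) i).obj (ModuleCat.of R M)).obj (ModuleCat.of R N)))

/-- The depth of a module over a local ring, via Rees' theorem:
`depth M = inf { i | Ext^i(k, M) ≠ 0 }` (so the zero module has depth `⊤`). -/
noncomputable def depthM (R : Type) [CommRing R] [IsLocalRing R] (M : Type) [AddCommGroup M]
    [Module R M] : ℕ∞ :=
  sInf {i : ℕ∞ | ∃ n : ℕ, i = n ∧ ¬ Subsingleton (ExtM R (IsLocalRing.ResidueField R) M n)}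

/-- A maximal Cohen-Macaulay module: a nonzero finitely generated module whose
depth equals the Krull dimension of the ring. -/
def IsMCM (R : Type) [CommRing R] [IsLocalRing R] (M : Type) [AddCommGroup M] [Module R M] :
    Prop :=
  Nontrivial M ∧ Module.Finite R M ∧ (depthM R M : WithBot ℕ∞) = ringKrullDim R

/-- A regular local ring: a Noetherian local ring whose maximal ideal is generated by a
regular sequence. -/
def IsRegularLocal (S : Type) [CommRing S] [IsLocalRing S] : Prop :=
  IsNoetherianRing S ∧ ∃ xs : List S, RingTheory.Sequence.IsRegular S xs ∧
    Ideal.span {x | x ∈ xs} = IsLocalRing.maximalIdeal S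

/-! ### Vanishing of `Ext` by dimension shifting -/

section Aux

variable {R : Type} [CommRing R]

/-- A nonzero Artinian module over a local ring contains a copy of the residue field. -/
lemma subsingleton_of_isArtinian_of_hom [IsLocalRing R] {Q : Type} [AddCommGroup Q] [Module R Q]
    [IsArtinian R Q] (h : ∀ f : IsLocalRing.ResidueField R →ₗ[R] Q, f = 0) : Subsingleton Q := by
  by_contra hQ
  rw [not_subsingleton_iff_nontrivial] at hQ
  obtain ⟨S, hS⟩ := IsAtomic.exists_atom (Submodule R Q)
  have hsimple : IsSimpleModule R S := isSimpleModule_iff_isAtom.mpr hS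
  obtain ⟨I, hI, ⟨e⟩⟩ := isSimpleModule_iff_quot_maximal.mp hsimple
  obtain rfl := IsLocalRing.eq_maximalIdeal hI
  let e' : S ≃ₗ[R] IsLocalRing.ResidueField R := e
  have h0 := h (S.subtype ∘ₗ e'.symm.toLinearMap)
  refine hS.1 ((Submodule.eq_bot_iff S).mpr fun x hx => ?_)
  simpa using LinearMap.congr_fun h0 (e' ⟨x, hx⟩)

lemma ext_subsingleton_X₁ (K : ModuleCat.{0} R) {S : ShortComplex (ModuleCat.{0} R)}
    (hS : S.ShortExact) {i j : ℕ} (hij : i + 1 = j) (h₂ : Subsingleton (Abelian.Ext K S.X₂ j))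
    (h₃ : Subsingleton (Abelian.Ext K S.X₃ i)) : Subsingleton (Abelian.Ext K S.X₁ j) := by
  refine subsingleton_of_forall_eq 0 fun x => ?_
  obtain ⟨y, rfl⟩ := Abelian.Ext.covariant_sequence_exact₁ K hS x (Subsingleton.elim _ _) hij
  rw [Subsingleton.elim y 0, Abelian.Ext.zero_comp]

lemma ext_subsingleton_X₂ (K : ModuleCat.{0} R) {S : ShortComplex (ModuleCat.{0} R)}
    (hS : S.ShortExact) {i : ℕ} (h₁ : Subsingleton (Abelian.Ext K S.X₁ i))
    (h₃ : Subsingleton (Abelian.Ext K S.X₃ i)) : Subsingleton (Abelian.Ext K S.X₂ i) := by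
  refine subsingleton_of_forall_eq 0 fun x => ?_
  obtain ⟨y, rfl⟩ := Abelian.Ext.covariant_sequence_exact₂ K hS x (Subsingleton.elim _ _)
  rw [Subsingleton.elim y 0, Abelian.Ext.zero_comp]

lemma ext_subsingleton_X₃ (K : ModuleCat.{0} R) {S : ShortComplex (ModuleCat.{0} R)}
    (hS : S.ShortExact) {i j : ℕ} (hij : i + 1 = j) (h₂ : Subsingleton (Abelian.Ext K S.X₂ i))
    (h₁ : Subsingleton (Abelian.Ext K S.X₁ j)) : Subsingleton (Abelian.Ext K S.X₃ i) := by
  refine subsingleton_of_forall_eq 0 fun x => ?_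
  obtain ⟨y, rfl⟩ := Abelian.Ext.covariant_sequence_exact₃ K hS x hij (Subsingleton.elim _ _)
  rw [Subsingleton.elim y 0, Abelian.Ext.zero_comp]

lemma ext_zero_subsingleton_iff (K N : Type) [AddCommGroup K] [Module R K] [AddCommGroup N]
    [Module R N] : Subsingleton (Abelian.Ext (ModuleCat.of R K) (ModuleCat.of R N) 0) ↔
      ∀ f : K →ₗ[R] N, f = 0 := by
  rw [(Abelian.Ext.linearEquiv₀ (R := R)).toEquiv.subsingleton_congr,
    ModuleCat.homAddEquiv.toEquiv.subsingleton_congr]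
  exact ⟨fun h f => Subsingleton.elim _ _, fun h => subsingleton_of_forall_eq 0 h⟩

/-- `Hom(F, N)` is a finite direct sum of copies of `N` when `F` is finite free, so its `Ext`
vanishes where that of `N` does. -/
lemma ext_subsingleton_hom_free (K : ModuleCat.{0} R) {F N : Type} [AddCommGroup F] [Module R F]
    [Module.Free R F] [Module.Finite R F] [AddCommGroup N] [Module R N] {i : ℕ}
    (h : Subsingleton (Abelian.Ext K (ModuleCat.of R N) i)) :
    Subsingleton (Abelian.Ext K (ModuleCat.of R (F →ₗ[R] N)) i) := by
  let b := Module.Free.chooseBasis R F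
  let p (a : Module.Free.ChooseBasisIndex R F) :
      ModuleCat.of R (F →ₗ[R] N) ⟶ ModuleCat.of R N :=
    ModuleCat.ofHom (LinearMap.applyₗ (b a))
  let s (a : Module.Free.ChooseBasisIndex R F) :
      ModuleCat.of R N ⟶ ModuleCat.of R (F →ₗ[R] N) :=
    ModuleCat.ofHom (LinearMap.smulRightₗ (b.coord a))
  have hid : 𝟙 (ModuleCat.of R (F →ₗ[R] N)) = ∑ a, p a ≫ s a := by
    refine ModuleCat.hom_ext (LinearMap.ext fun f => b.ext fun c => ?_)
    simp [p, s, ModuleCat.hom_sum, Finsupp.single_apply]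
  refine subsingleton_of_forall_eq 0 fun x => ?_
  rw [← Abelian.Ext.comp_mk₀_id x, hid, Abelian.Ext.mk₀_sum, Abelian.Ext.comp_sum]
  refine Finset.sum_eq_zero fun a _ => ?_
  rw [← Abelian.Ext.mk₀_comp_mk₀, ← Abelian.Ext.comp_assoc_of_second_deg_zero,
    Subsingleton.elim (x.comp (Abelian.Ext.mk₀ (p a)) _) 0, Abelian.Ext.zero_comp]

/-- The theorem for `Abelian.Ext`, with `n + 2` in place of `n`, depth expressed by the vanishing of
`Ext` from the residue field, and finite length weakened to Artinian. The induction replaces `M` by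
its first syzygy `ker f`, which lowers the bound on `depth Hom(M, N)` by one. -/
lemma ext_vanishing [IsLocalRing R] [IsNoetherianRing R] (N : Type) [AddCommGroup N] [Module R N]
    (n : ℕ) (M : Type) [AddCommGroup M] [Module R M] [Module.Finite R M]
    (h1 : ∀ j < n + 2, Subsingleton (Abelian.Ext (ModuleCat.of R (IsLocalRing.ResidueField R))
      (ModuleCat.of R (M →ₗ[R] N)) j))
    (h2 : ∀ j < n + 1, Subsingleton (Abelian.Ext (ModuleCat.of R (IsLocalRing.ResidueField R))
      (ModuleCat.of R N) j))
    (h3 : ∀ i, 1 ≤ i → i ≤ n → IsArtinian R (Abelian.Ext (ModuleCat.of R M) (ModuleCat.of R N) i)) :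
    ∀ i, 1 ≤ i → i ≤ n → Subsingleton (Abelian.Ext (ModuleCat.of R M) (ModuleCat.of R N) i) := by
  induction n generalizing M with
  | zero => intro i h h'; omega
  | succ n ih =>
    obtain ⟨F, _, _, _, _, f, hf⟩ := Module.exists_finite_presentation R M
    let k := ModuleCat.of R (IsLocalRing.ResidueField R)
    have hS : f.shortComplexKer.ShortExact := LinearMap.shortExact_shortComplexKer hf
    have hproj : Projective f.shortComplexKer.X₂ :=
      ModuleCat.projective_of_categoryTheory_projective _
    -- restriction of maps `F → N` to the syzygy `ker f`
    let r : (F →ₗ[R] N) →ₗ[R] (LinearMap.ker f →ₗ[R] N) :=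
      LinearMap.lcomp R N (LinearMap.ker f).subtype
    -- `0 → Hom(M, N) → Hom(F, N) → range r → 0`
    have hexact : Function.Exact (LinearMap.lcomp R N f) r.rangeRestrict := by
      intro g
      refine ⟨fun hg => ?_, ?_⟩
      · have hg' : LinearMap.ker f ≤ LinearMap.ker g := fun x hx =>
          LinearMap.congr_fun (congrArg Subtype.val hg) ⟨x, hx⟩
        refine ⟨(LinearMap.ker f).liftQ g hg' ∘ₗ
          (f.quotKerEquivOfSurjective hf).symm.toLinearMap, ?_⟩
        ext x
        have : (f.quotKerEquivOfSurjective hf).symm (f x) = Submodule.Quotient.mk x :=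
          (LinearEquiv.symm_apply_eq _).mpr rfl
        simp [this]
      · rintro ⟨g, rfl⟩
        refine Subtype.ext (LinearMap.ext fun x => ?_)
        change g (f x) = 0
        rw [LinearMap.mem_ker.mp x.2, map_zero]
    let S₁ : ShortComplex (ModuleCat.{0} R) :=
      ModuleCat.shortComplexOfCompEqZero (LinearMap.lcomp R N f) r.rangeRestrict
        hexact.linearMap_comp_eq_zero
    have hS₁ : S₁.ShortExact := ModuleCat.shortComplex_shortExact S₁ hexact
      (LinearMap.lcomp_injective_of_surjective _ hf) r.surjective_rangeRestrict
    have hC : ∀ j < n + 2, Subsingleton (Abelian.Ext k (ModuleCat.of R (LinearMap.range r)) j) :=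
      fun j hj => ext_subsingleton_X₃ k hS₁ rfl (ext_subsingleton_hom_free k (h2 j hj))
        (h1 (j + 1) (by omega))
    -- `0 → range r → Hom(ker f, N) → Q → 0`
    let S₂ : ShortComplex (ModuleCat.{0} R) :=
      ModuleCat.shortComplexOfCompEqZero (LinearMap.range r).subtype (LinearMap.range r).mkQ
        (by ext; simp)
    have hS₂ : S₂.ShortExact := ModuleCat.shortComplex_shortExact S₂
      (LinearMap.exact_subtype_mkQ _) (Submodule.injective_subtype _) (Submodule.mkQ_surjective _)
    -- a map from the residue field to `Hom(ker f, N)` vanishes after evaluation at each `x`,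
    -- because `depth N ≥ 1`
    have hHom : Subsingleton (Abelian.Ext k (ModuleCat.of R (LinearMap.ker f →ₗ[R] N)) 0) := by
      rw [ext_zero_subsingleton_iff]
      intro φ
      ext a x
      have := (ext_zero_subsingleton_iff _ _).mp (h2 0 (by omega)) (LinearMap.applyₗ x ∘ₗ φ)
      exact LinearMap.congr_fun this a
    have hkQ : Subsingleton (Abelian.Ext k
        (ModuleCat.of R ((LinearMap.ker f →ₗ[R] N) ⧸ LinearMap.range r)) 0) :=
      ext_subsingleton_X₃ k hS₂ rfl hHom (hC 1 (by omega))
    -- the connecting map `Hom(ker f, N) → Ext¹(M, N)`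
    let δ : (LinearMap.ker f →ₗ[R] N) →ₗ[R]
        Abelian.Ext (ModuleCat.of R M) (ModuleCat.of R N) 1 :=
      hS.extClass.precompOfLinear R (ModuleCat.of R N) (add_zero 1) ∘ₗ
        ((Abelian.Ext.linearEquiv₀ (R := R)).trans ModuleCat.homLinearEquiv).symm.toLinearMap
    have hδ : Function.Surjective δ := 
      (precomp_extClass_surjective_of_projective_X₂ (ModuleCat.of R N) hS 0).comp
        (LinearEquiv.surjective _)
    -- a map on `ker f` has trivial class in `Ext¹(M, N)` exactly when it extends to `F`
    have hker : LinearMap.ker δ = LinearMap.range r := by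
      ext g
      rw [LinearMap.mem_ker]
      change hS.extClass.comp (Abelian.Ext.mk₀ (ModuleCat.ofHom g)) (add_zero 1) = 0 ↔ _
      constructor
      · intro hg
        obtain ⟨y, hy⟩ := Abelian.Ext.contravariant_sequence_exact₁ hS _ _ (add_zero 1) hg
        obtain ⟨y, rfl⟩ := Abelian.Ext.homEquiv₀.symm.surjective y
        refine ⟨y.hom, ?_⟩
        rw [Abelian.Ext.homEquiv₀_symm_apply, Abelian.Ext.mk₀_comp_mk₀] at hy
        exact congrArg ModuleCat.Hom.hom (Abelian.Ext.homEquiv₀.symm.injective hy)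
      · rintro ⟨g, rfl⟩
        have : ModuleCat.ofHom (r g) = f.shortComplexKer.f ≫ ModuleCat.ofHom g := rfl
        rw [this, ← Abelian.Ext.mk₀_comp_mk₀, hS.extClass_comp_assoc]
    have e : ((LinearMap.ker f →ₗ[R] N) ⧸ LinearMap.range r) ≃ₗ[R]
        Abelian.Ext (ModuleCat.of R M) (ModuleCat.of R N) 1 :=
      (Submodule.quotEquivOfEq _ _ hker.symm).trans (δ.quotKerEquivOfSurjective hδ)
    have : IsArtinian R ((LinearMap.ker f →ₗ[R] N) ⧸ LinearMap.range r) :=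
      have := h3 1 le_rfl (by omega)
      isArtinian_of_injective e.toLinearMap e.injective
    have hQ : Subsingleton ((LinearMap.ker f →ₗ[R] N) ⧸ LinearMap.range r) :=
      subsingleton_of_isArtinian_of_hom ((ext_zero_subsingleton_iff _ _).mp hkQ)
    have hExt1 : Subsingleton (Abelian.Ext (ModuleCat.of R M) (ModuleCat.of R N) 1) :=
      e.symm.toEquiv.subsingleton
    have hsurj (i : ℕ) := precomp_extClass_surjective_of_projective_X₂ (ModuleCat.of R N) hS i
    have hzero (j : ℕ) : Subsingleton (Abelian.Ext k S₂.X₃ j) := by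
      have hz : Limits.IsZero S₂.X₃ := @ModuleCat.isZero_of_subsingleton _ _ _ hQ
      refine subsingleton_of_forall_eq 0 fun x => ?_
      rw [← Abelian.Ext.comp_mk₀_id x, hz.eq_of_src (𝟙 _) 0, Abelian.Ext.mk₀_zero,
        Abelian.Ext.comp_zero]
    -- as `Q = 0`, the syzygy satisfies the induction hypothesis: its `Hom` into `N` is `range r`
    have IH := ih (LinearMap.ker f)
      (fun j hj => ext_subsingleton_X₂ k hS₂ (hC j hj) (hzero j))
      (fun j hj => h2 j (by omega))
      (fun i hi hin => by
        have hinj : Function.Injective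
            (hS.extClass.precompOfLinear R (ModuleCat.of R N) (add_comm 1 i)) := by
          rw [injective_iff_map_eq_zero]
          intro x hx
          obtain ⟨y, rfl⟩ := Abelian.Ext.contravariant_sequence_exact₁ hS _ x (add_comm 1 i) hx
          obtain ⟨i, rfl⟩ := Nat.exists_eq_add_of_le' hi
          rw [Abelian.Ext.eq_zero_of_projective y, Abelian.Ext.comp_zero]
        have := h3 (i + 1) (by omega) (by omega)
        exact isArtinian_of_injective _ hinj)
    intro i hi hin
    obtain rfl | hi' := hi.eq_or_lt
    · exact hExt1
    · obtain ⟨i, rfl⟩ := Nat.exists_eq_add_of_le' hi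
      have := IH i (by omega) (by omega)
      exact (hsurj i).subsingleton

end Aux

/-! ### The two constructions of `Ext` -/

section Comparison

variable {R : Type} [CommRing R]

lemma extMk_smul {X Y : ModuleCat.{0} R} (P : ProjectiveResolution X) {n : ℕ}
    (f : P.complex.X n ⟶ Y) (m : ℕ) (hm : n + 1 = m) (hf : P.complex.d m n ≫ f = 0) (a : R) :
    P.extMk (a • f) m hm (by rw [Linear.comp_smul, hf, smul_zero]) = a • P.extMk f m hm hf := by
  rw [Abelian.Ext.smul_eq_comp_mk₀, P.extMk_comp_mk₀]
  congr 1

/-- The linear map sending a cocycle of `Hom(P, Y)` to its class in `Abelian.Ext X Y n`. -/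
noncomputable def cocycleClass {X Y : ModuleCat.{0} R} (P : ProjectiveResolution X) (n : ℕ) :
    LinearMap.ker ((P.complex.linearYonedaObj R Y).sc n).g.hom →ₗ[R] Abelian.Ext X Y n where
  toFun f := P.extMk (Y := Y) f.1 ((ComplexShape.up ℕ).next n) (by simp) f.2
  map_add' f g := (P.add_extMk _ _ _ _ _ _).symm
  map_smul' a f := extMk_smul P _ _ _ _ a

lemma cocycleClass_surjective {X Y : ModuleCat.{0} R} (P : ProjectiveResolution X) (n : ℕ) :
    Function.Surjective (cocycleClass (Y := Y) P n) := by
  intro α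
  obtain ⟨f, hf, h⟩ := P.extMk_surjective α ((ComplexShape.up ℕ).next n) (by simp)
  exact ⟨⟨f, hf⟩, h⟩

lemma range_le_ker_cocycleClass {X Y : ModuleCat.{0} R} (P : ProjectiveResolution X) (n : ℕ) :
    LinearMap.range ((P.complex.linearYonedaObj R Y).sc n).moduleCatToCycles ≤
      LinearMap.ker (cocycleClass P n) := by
  rintro _ ⟨g, rfl⟩
  rw [LinearMap.mem_ker]
  cases n with
  | zero =>
    -- no differential enters degree zero: the incoming map goes from degree `prev 0 = 0`
    have h0 : ((P.complex.linearYonedaObj R Y).sc 0).f = 0 :=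
      (P.complex.linearYonedaObj R Y).shape ((ComplexShape.up ℕ).prev 0) 0 (by simp)
    have : ((P.complex.linearYonedaObj R Y).sc 0).moduleCatToCycles g = 0 :=
      Subtype.ext (congrArg (fun φ => φ.hom g) h0)
    rw [this, map_zero]
  | succ n =>
    exact (P.extMk_eq_zero_iff _ _ (by simp)
      (((P.complex.linearYonedaObj R Y).sc (n + 1)).moduleCatToCycles g).2
      ((ComplexShape.up ℕ).prev (n + 1)) (by simp)).mpr ⟨g, rfl⟩

lemma ker_cocycleClass_succ {X Y : ModuleCat.{0} R} (P : ProjectiveResolution X) (n : ℕ) :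
    LinearMap.ker (cocycleClass P (n + 1)) =
    LinearMap.range ((P.complex.linearYonedaObj R Y).sc (n + 1)).moduleCatToCycles := by
  refine le_antisymm (fun f hf => ?_) (range_le_ker_cocycleClass P _)
  obtain ⟨g, hg⟩ := (P.extMk_eq_zero_iff _ _ (by simp) f.2 ((ComplexShape.up ℕ).prev (n + 1))
    (by simp)).mp hf
  exact ⟨g, Subtype.ext hg⟩

/-- The derived-functor `Ext` is the homology of `Hom(P, N)` for a projective resolution `P`
of `M`. -/
noncomputable def extMEquiv (M N : Type) [AddCommGroup M] [Module R M] [AddCommGroup N]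
    [Module R N] (P : ProjectiveResolution (ModuleCat.of R M)) (n : ℕ) :
    ExtM R M N n ≃ₗ[R]
      (LinearMap.ker ((P.complex.linearYonedaObj R (ModuleCat.of R N)).sc n).g.hom ⧸
        LinearMap.range
          ((P.complex.linearYonedaObj R (ModuleCat.of R N)).sc n).moduleCatToCycles) :=
  (P.isoExt n (ModuleCat.of R N) ≪≫ ShortComplex.moduleCatHomologyIso _).toLinearEquiv

/-- Only the surjectivity of the comparison map is used, so degree zero is included. -/
lemma subsingleton_ext_of_extM {M N : Type} [AddCommGroup M] [Module R M] [AddCommGroup N]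
    [Module R N] {n : ℕ} (h : Subsingleton (ExtM R M N n)) :
    Subsingleton (Abelian.Ext (ModuleCat.of R M) (ModuleCat.of R N) n) := by
  let P := projectiveResolution (ModuleCat.of R M)
  have := (extMEquiv M N P n).symm.toEquiv.subsingleton
  refine subsingleton_of_forall_eq 0 fun x => ?_
  obtain ⟨c, rfl⟩ := cocycleClass_surjective P n x
  exact range_le_ker_cocycleClass P n
    ((Submodule.Quotient.mk_eq_zero _).mp (Subsingleton.elim _ _))

/-- In positive degrees the derived-functor `Ext` agrees with the one defined through the
derived category. -/
lemma nonempty_extM_equiv (M N : Type) [AddCommGroup M] [Module R M] [AddCommGroup N]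
    [Module R N] {n : ℕ} (hn : 1 ≤ n) :
    Nonempty (ExtM R M N n ≃ₗ[R] Abelian.Ext (ModuleCat.of R M) (ModuleCat.of R N) n) := by
  obtain ⟨n, rfl⟩ := Nat.exists_eq_add_of_le' hn
  let P := projectiveResolution (ModuleCat.of R M)
  exact ⟨(extMEquiv M N P (n + 1)).trans ((Submodule.quotEquivOfEq _ _
    (ker_cocycleClass_succ P n).symm).trans
      ((cocycleClass P (n + 1)).quotKerEquivOfSurjective (cocycleClass_surjective P _)))⟩

lemma subsingleton_ext_of_lt_depthM [IsLocalRing R] {M : Type} [AddCommGroup M] [Module R M]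
    {n j : ℕ} (h : (n : ℕ∞) ≤ depthM R M) (hj : j < n) :
    Subsingleton (Abelian.Ext (ModuleCat.of R (IsLocalRing.ResidueField R))
      (ModuleCat.of R M) j) := by
  refine subsingleton_ext_of_extM ?_
  by_contra hs
  have : (n : ℕ∞) ≤ j := h.trans (sInf_le ⟨j, rfl, hs⟩)
  exact absurd (Nat.cast_le.mp this) (by omega)

end Comparison

/-- Let `R` be a commutative Noetherian local ring, `M`, `N` finitely
generated `R`-modules and `n ≥ 3`. If `depth Hom(M,N) ≥ n`, `depth N ≥ n-1` and
`Ext^i(M,N)` has finite length for `i = 1, …, n-2`, then `Ext^i(M,N) = 0` for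
`i = 1, …, n-2`. -/
theorem stmt7 (R : Type) [CommRing R] [IsLocalRing R] [IsNoetherianRing R]
    (M N : Type) [AddCommGroup M] [Module R M] [AddCommGroup N] [Module R N]
    [Module.Finite R M] [Module.Finite R N]
    (n : ℕ) (hn : 3 ≤ n)
    (h1 : (n : ℕ∞) ≤ depthM R (M →ₗ[R] N))
    (h2 : ((n - 1 : ℕ) : ℕ∞) ≤ depthM R N)
    (h3 : ∀ i : ℕ, 1 ≤ i → i ≤ n - 2 → IsFiniteLength R (ExtM R M N i)) :
    ∀ i : ℕ, 1 ≤ i → i ≤ n - 2 → Subsingleton (ExtM R M N i) := by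
  intro i hi hin
  obtain ⟨e⟩ := nonempty_extM_equiv (R := R) M N hi
  refine @Equiv.subsingleton _ _ e.toEquiv ?_
  refine ext_vanishing N (n - 2) M
    (fun j hj => subsingleton_ext_of_lt_depthM h1 (by omega))
    (fun j hj => subsingleton_ext_of_lt_depthM h2 (by omega))
    (fun i hi hin => ?_) i hi hin
  obtain ⟨e⟩ := nonempty_extM_equiv (R := R) M N hi
  have := (isFiniteLength_iff_isNoetherian_isArtinian.mp (h3 i hi hin)).2
  exact isArtinian_of_injective e.symm.toLinearMap e.symm.injective
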